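/- Let α > 0, let n be an integer with n ≥ 2^{1/α}, let 0 < ε < 1, set r = log(3/ε), and let m be an integer with 2n ≤ m ≤ α·n·log(n·2^{−1/α})/log(3/ε). Let t = (m − n)/n and let Z be a Poisson random variable with mean r. Then for every integer i ≥ 1, (1/m)·|1 + (−t)^i·P(Z ≥ i)| ≤ n^α/n. In other words, the maximum coefficient of the normalized support coverage estimator Ŝ_m/m is at most n^α/n. -/

import Mathlib

/-- The tail probability `P(Z ≥ i)` of a Poisson random variable `Z` with mean `r`. -/
noncomputable def poissonTail (r : ℝ) (i : ℕ) : ℝ :=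
  ∑' j : ℕ, if i ≤ j then Real.exp (-r) * r ^ j / (j.factorial : ℝ) else 0

/-!
The Chernoff bound `s ^ i * P(Z ≥ i) ≤ E[s ^ Z] = exp (r * (s - 1))` at `s = 1 + |t|` bounds every
coefficient by `1 + exp (r * |t|)`. Here `1 + t = m / n`, and the upper bound on `m` says exactly
that `exp (r * (m / n)) ≤ n ^ α / 2`; in particular `1 ≤ n ^ α / 2`, so both summands are at
most `n ^ α / 2`.
-/

open Real

lemma hasSum_poisson_mul_pow (r s : ℝ) :
    HasSum (fun j : ℕ ↦ exp (-r) * r ^ j / j.factorial * s ^ j) (exp (r * (s - 1))) := by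
  have h := (NormedSpace.expSeries_div_hasSum_exp (r * s)).mul_left (exp (-r))
  rw [← exp_eq_exp_ℝ, ← exp_add] at h
  convert! h using 2
  · rw [mul_pow]; ring
  · ring

section PoissonTail

variable {r : ℝ}

lemma poissonTail_nonneg (hr : 0 ≤ r) (i : ℕ) : 0 ≤ poissonTail r i :=
  tsum_nonneg fun j ↦ by split_ifs <;> positivity

lemma poissonTail_mul_pow_le_exp (hr : 0 ≤ r) {s : ℝ} (hs : 1 ≤ s) (i : ℕ) :
    poissonTail r i * s ^ i ≤ exp (r * (s - 1)) := by
  set p : ℕ → ℝ := fun j ↦ exp (-r) * r ^ j / j.factorial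
  have hp (j : ℕ) : 0 ≤ p j := by positivity
  have term_nonneg (j : ℕ) : 0 ≤ (if i ≤ j then p j else 0) * s ^ i := by
    split_ifs <;> positivity [hp j]
  have term_le (j : ℕ) : (if i ≤ j then p j else 0) * s ^ i ≤ p j * s ^ j := by
    split_ifs with hij
    · exact mul_le_mul_of_nonneg_left (pow_le_pow_right₀ hs hij) (hp j)
    · rw [zero_mul]; positivity
  have hsum : HasSum (fun j ↦ p j * s ^ j) (exp (r * (s - 1))) := hasSum_poisson_mul_pow r s
  calc
    poissonTail r i * s ^ i = ∑' j, (if i ≤ j then p j else 0) * s ^ i := tsum_mul_right.symm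
    _ ≤ ∑' j, p j * s ^ j :=
      (hsum.summable.of_nonneg_of_le term_nonneg term_le).tsum_le_tsum term_le hsum.summable
    _ = exp (r * (s - 1)) := hsum.tsum_eq

lemma abs_one_add_pow_mul_poissonTail_le (hr : 0 ≤ r) (t : ℝ) (i : ℕ) :
    |1 + t ^ i * poissonTail r i| ≤ 1 + exp (r * |t|) := by
  have tail_nonneg := poissonTail_nonneg hr i
  calc
    |1 + t ^ i * poissonTail r i| ≤ |1| + |t ^ i * poissonTail r i| := abs_add_le _ _
    _ = 1 + poissonTail r i * |t| ^ i := by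
      rw [abs_one, abs_mul, abs_pow, abs_of_nonneg tail_nonneg, mul_comm]
    _ ≤ 1 + poissonTail r i * (1 + |t|) ^ i := by gcongr; exact le_add_of_nonneg_left zero_le_one
    _ ≤ 1 + exp (r * |t|) := by
      have chernoff := poissonTail_mul_pow_le_exp hr (le_add_of_nonneg_right (abs_nonneg t)) i
      rw [add_sub_cancel_left] at chernoff
      gcongr

end PoissonTail

lemma mul_log_mul_rpow_neg_one_div {α x c : ℝ} (hα : α ≠ 0) (hx : 0 < x) (hc : 0 < c) :
    α * log (x * c ^ (-(1 / α))) = log (x ^ α / c) := by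
  rw [← log_rpow (by positivity), mul_rpow hx.le (by positivity), ← rpow_mul hc.le, neg_mul,
    one_div_mul_cancel hα, rpow_neg_one, div_eq_mul_inv]

lemma exp_mul_div_le_rpow_div {α n m r c : ℝ} (hα : α ≠ 0) (hn : 0 < n) (hr : 0 < r) (hc : 0 < c)
    (hm : m ≤ α * n * log (n * c ^ (-(1 / α))) / r) :
    exp (r * (m / n)) ≤ n ^ α / c := by
  rw [← le_log_iff_exp_le (by positivity), ← mul_log_mul_rpow_neg_one_div hα hn hc,
    mul_div_assoc', div_le_iff₀ hn]
  linarith [(le_div_iff₀ hr).mp hm]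

theorem gt_norm_coefficient_bound_general {α n m r t : ℝ} (hα : α ≠ 0) (hn : 0 < n) (hr : 0 < r)
    (hnm : n ≤ m) (hm : m ≤ α * n * log (n * 2 ^ (-(1 / α))) / r)
    (ht : t = (m - n) / n) (i : ℕ) :
    1 / m * |1 + (-t) ^ i * poissonTail r i| ≤ n ^ α / n := by
  have hm0 : 0 < m := hn.trans_le hnm
  have ht0 : 0 ≤ t := ht ▸ div_nonneg (sub_nonneg.mpr hnm) hn.le
  have t_le : t ≤ m / n := by rw [ht]; gcongr; linarith
  have exp_le : exp (r * (m / n)) ≤ n ^ α / 2 := exp_mul_div_le_rpow_div hα hn hr two_pos hm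
  have coeff_le : |1 + (-t) ^ i * poissonTail r i| ≤ n ^ α := calc
    _ ≤ 1 + exp (r * |-t|) := abs_one_add_pow_mul_poissonTail_le hr.le (-t) i
    _ = 1 + exp (r * t) := by rw [abs_neg, abs_of_nonneg ht0]
    _ ≤ exp (r * (m / n)) + exp (r * (m / n)) := by
      gcongr
      exact one_le_exp (by positivity)
    _ ≤ n ^ α := by linarith
  rw [one_div_mul_eq_div]
  gcongr

/-- **Normalized coefficient bound for the support coverage estimator.** For `α > 0`,
`n ≥ 2^{1/α}`, `0 < ε < 1`, `r = log(3/ε)`, and `2n ≤ m ≤ α·n·log(n·2^{-1/α})/log(3/ε)`,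
with `t = (m-n)/n` and `Z ~ Poisson(r)`, the coefficient of `φ_i` in `Ŝ_m / m` satisfies
`(1/m)·|1 + (-t)^i·P(Z ≥ i)| ≤ n^α / n` for every `i ≥ 1`. -/
theorem gt_norm_coefficient_bound (α : ℝ) (hα : 0 < α)
    (n : ℕ) (hn : (2 : ℝ) ^ (1 / α) ≤ (n : ℝ))
    (ε : ℝ) (hε0 : 0 < ε) (hε1 : ε < 1)
    (r : ℝ) (hr : r = Real.log (3 / ε))
    (m : ℕ) (hm1 : 2 * n ≤ m)
    (hm2 : (m : ℝ) ≤ α * n * Real.log ((n : ℝ) * 2 ^ (-(1 / α))) / Real.log (3 / ε))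
    (t : ℝ) (ht : t = ((m : ℝ) - n) / n)
    (i : ℕ) (hi : 1 ≤ i) :
    (1 / (m : ℝ)) * |1 + (-t) ^ i * poissonTail r i| ≤ (n : ℝ) ^ α / n := by
  have hn0 : (0 : ℝ) < n := (rpow_pos_of_pos two_pos _).trans_le hn
  have hr0 : 0 < r := hr ▸ log_pos ((one_lt_div hε0).mpr (by linarith))
  exact gt_norm_coefficient_bound_general hα.ne' hn0 hr0 (by exact_mod_cast (by lia : n ≤ m))
    (hr ▸ hm2) ht i
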